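/- arXiv:math/0512024 — 3 statements merged into one kernel-verified Lean document; each statement's English description precedes it below -/
import Mathlib

section
/- For any monoids A, B and C, the direct product (A ≀ B) × C embeds in the wreath product A ≀ (B × C). Explicitly, the map ψ : (A ≀ B) × C → A ≀ (B × C) given by ((f,b),c)ψ = (fα, (b,c)), where fα : B × C → A is defined by (b₀,c₀)(fα) = b₀f, is an injective monoid homomorphism. -/
/-- The wreath product `S ≀ T` of monoids: underlying set `S^T × T = (T → S) × T`, with
multiplication `(f, a)(g, b) = (f · ᵃg, ab)` where `t (ᵃg) = g (t * a)`
(functions are applied on the right, and `T` acts on `S^T` by `t₂(^{t₁}f) = (t₂t₁)f`). -/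
def WreathProduct (S T : Type*) [Monoid S] [Monoid T] : Type _ := (T → S) × T

instance WreathProduct.instMonoid (S T : Type*) [Monoid S] [Monoid T] :
    Monoid (WreathProduct S T) where
  mul x y := (fun t => x.1 t * y.1 (t * x.2), x.2 * y.2)
  one := (fun _ => 1, 1)
  mul_assoc x y z := by
    refine Prod.ext (funext fun t => ?_) (mul_assoc _ _ _)
    show x.1 t * y.1 (t * x.2) * z.1 (t * (x.2 * y.2)) =
      x.1 t * (y.1 (t * x.2) * z.1 (t * x.2 * y.2))
    rw [mul_assoc, mul_assoc]
  one_mul x := by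
    refine Prod.ext (funext fun t => ?_) (one_mul _)
    show 1 * x.1 (t * 1) = x.1 t
    rw [one_mul, mul_one]
  mul_one x := by
    refine Prod.ext (funext fun t => ?_) (mul_one _)
    show x.1 t * 1 = x.1 t
    rw [mul_one]

/-!
`(A ≀ B) × C` is the fibre product of `A ≀ B` and `B × C` over `B`. Precomposing the function
component with a surjection `π : U → T` embeds the fibre product of `S ≀ T` and `U` over `T` in
`S ≀ U`; take for `π` the projection `B × C → B`.
-/

namespace WreathProduct

variable {M S T U : Type*} [MulOneClass M] [Monoid S] [Monoid T] [Monoid U]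

/-- The projection of the wreath product `S ≀ T` onto its acting factor `T`. -/
def rightHom : WreathProduct S T →* T where
  toFun := Prod.snd
  map_one' := rfl
  map_mul' _ _ := rfl

theorem mul_fst_apply (x y : WreathProduct S T) (t : T) :
    (x * y).1 t = x.1 t * y.1 (t * rightHom x) :=
  rfl

/-- The homomorphism into `S ≀ U` that lifts `w : M →* S ≀ T` along `π : U →* T`: if `w m = (f, t)`,
then `m ↦ (f ∘ π, u m)`. The condition `h` says that `w` and `u` define a homomorphism from `M` to
the fibre product of `S ≀ T` and `U` over `T`. -/
def liftAlong (π : U →* T) (w : M →* WreathProduct S T) (u : M →* U)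
    (h : ∀ m, π (u m) = rightHom (w m)) : M →* WreathProduct S U where
  toFun m := ((w m).1 ∘ π, u m)
  map_one' := by
    rw [map_one, map_one]
    rfl
  map_mul' m n := by
    refine Prod.ext (funext fun s => ?_) (map_mul u m n)
    calc (w (m * n)).1 (π s)
        = (w m).1 (π s) * (w n).1 (π s * rightHom (w m)) := by rw [map_mul, mul_fst_apply]
      _ = (w m).1 (π s) * (w n).1 (π (s * u m)) := by rw [map_mul, h]

theorem liftAlong_injective {π : U →* T} {w : M →* WreathProduct S T} {u : M →* U}
    (h : ∀ m, π (u m) = rightHom (w m)) (hπ : Function.Surjective π)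
    (hwu : Function.Injective (w.prod u)) : Function.Injective (liftAlong π w u h) := by
  intro m n hmn
  obtain ⟨hf, hu⟩ : (w m).1 ∘ π = (w n).1 ∘ π ∧ u m = u n := Prod.mk.inj hmn
  have h_right : rightHom (w m) = rightHom (w n) := by rw [← h, ← h, hu]
  have hw : w m = w n := Prod.ext (hπ.injective_comp_right hf) h_right
  exact hwu (Prod.ext hw hu)

end WreathProduct

/-- For monoids `A`, `B`, `C`, the map
`ψ : (A ≀ B) × C → A ≀ (B × C)`, `((f, b), c) ↦ (fα, (b, c))` where
`(b₀, c₀)(fα) = b₀ f`, is an injective monoid homomorphism; in particular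
`(A ≀ B) × C` embeds in `A ≀ (B × C)`. -/
theorem wreath_prod_absorb (A B C : Type*) [Monoid A] [Monoid B] [Monoid C] :
    ∃ ψ : (WreathProduct A B) × C →* WreathProduct A (B × C),
      Function.Injective ψ ∧
        ∀ (f : B → A) (b : B) (c : C),
          ψ ((f, b), c) = ((fun p : B × C => f p.1), (b, c)) := by
  let w := MonoidHom.fst (WreathProduct A B) C
  let u := (WreathProduct.rightHom (S := A) (T := B)).prodMap (MonoidHom.id C)
  have hwu : Function.Injective (w.prod u) := fun x y h => by
    obtain ⟨hw, hu⟩ : x.1 = y.1 ∧ (x.1.2, x.2) = (y.1.2, y.2) := Prod.mk.inj h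
    exact Prod.ext hw (Prod.mk.inj hu).2
  exact ⟨WreathProduct.liftAlong (MonoidHom.fst B C) w u fun _ => rfl,
    WreathProduct.liftAlong_injective _ Prod.fst_surjective hwu, fun _ _ _ => rfl⟩
end

section
/- If A and B are finite aperiodic monoids, then the wreath product A ≀ B is aperiodic. -/
/-- A subsemigroup of a monoid which is a group under the induced operation. -/
def IsGroupSubsemigroup {M : Type*} [Monoid M] (S : Subsemigroup M) : Prop :=
  ∃ e ∈ S, (∀ x ∈ S, e * x = x ∧ x * e = x) ∧ ∀ x ∈ S, ∃ y ∈ S, x * y = e ∧ y * x = e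

/-- A monoid is aperiodic if all of its subgroups (subsemigroups which are groups
under the induced operation) are trivial. -/
def IsAperiodic (M : Type*) [Monoid M] : Prop :=
  ∀ S : Subsemigroup M, IsGroupSubsemigroup S → ∀ a ∈ S, ∀ b ∈ S, a = b

/-!
A homomorphism from a subgroup `G` of `A ≀ B` to an aperiodic monoid is constant. Applied to the
projection onto `B`, this gives every element of `G` the same `B`-component, an idempotent `b`.
Hence all of `G` fixes each point `t * b` under right translation, so that evaluating the
function components at `t * b` is a homomorphism from `G` to `A`, and is constant as well. As
`x = e * x` for the identity `e` of `G`, the function component of `x` at `t` depends only on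
its value at `t * b`.
-/

section Aperiodic

variable {M N : Type*} [Monoid M] [Monoid N] {G : Subsemigroup M}

theorem IsGroupSubsemigroup.srange (hG : IsGroupSubsemigroup G) (φ : G →ₙ* N) :
    IsGroupSubsemigroup φ.srange := by
  obtain ⟨e, he, e_identity, exists_inverse⟩ := hG
  refine ⟨φ ⟨e, he⟩, ⟨_, rfl⟩, ?_, ?_⟩
  · rintro _ ⟨⟨x, hx⟩, rfl⟩
    simp only [← map_mul, MulMemClass.mk_mul_mk, e_identity x hx, and_self]
  · rintro _ ⟨⟨x, hx⟩, rfl⟩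
    obtain ⟨y, hy, hxy, hyx⟩ := exists_inverse x hx
    refine ⟨φ ⟨y, hy⟩, ⟨_, rfl⟩, ?_⟩
    simp only [← map_mul, MulMemClass.mk_mul_mk, hxy, hyx, and_self]

theorem IsAperiodic.mulHom_apply_eq (hN : IsAperiodic N) (hG : IsGroupSubsemigroup G)
    (φ : G →ₙ* N) (x y : G) : φ x = φ y :=
  hN φ.srange (hG.srange φ) (φ x) ⟨x, rfl⟩ (φ y) ⟨y, rfl⟩

end Aperiodic

namespace WreathProduct

variable {S T : Type*} [Monoid S] [Monoid T]

theorem ext {x y : WreathProduct S T} (h_fst : ∀ t, x.1 t = y.1 t) (h_snd : x.2 = y.2) : x = y :=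
  Prod.ext (funext h_fst) h_snd

theorem fst_mul_apply (x y : WreathProduct S T) (t : T) :
    (x * y).1 t = x.1 t * y.1 (t * x.2) :=
  rfl

/-- The projection of the wreath product `S ≀ T` onto the acting monoid `T`. -/
def sndHom : WreathProduct S T →* T where
  toFun := Prod.snd
  map_one' := rfl
  map_mul' _ _ := rfl

/-- Evaluation of the function components at a point `t`, as a homomorphism on a subsemigroup
of `S ≀ T` whose elements all fix `t` under right translation. -/
def evalHom (G : Subsemigroup (WreathProduct S T)) (t : T) (h_fix : ∀ x ∈ G, t * x.2 = t) :
    G →ₙ* S where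
  toFun x := x.1.1 t
  map_mul' x y := by
    rw [MulMemClass.coe_mul, fst_mul_apply, h_fix x x.2]

end WreathProduct

theorem wreath_aperiodic_general {A B : Type*} [Monoid A] [Monoid B]
    (hA : IsAperiodic A) (hB : IsAperiodic B) :
    IsAperiodic (WreathProduct A B) := by
  intro G hG x hx y hy
  have snd_eq : ∀ u ∈ G, ∀ v ∈ G, u.2 = v.2 := fun u hu v hv =>
    hB.mulHom_apply_eq hG (WreathProduct.sndHom.toMulHom.comp (MulMemClass.subtype G))
      ⟨u, hu⟩ ⟨v, hv⟩
  have ⟨e, he, e_identity, _⟩ := hG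
  have e_snd_idem : e.2 * e.2 = e.2 := snd_eq (e * e) (G.mul_mem he he) e he
  have fixes (t : B) : ∀ u ∈ G, t * e.2 * u.2 = t * e.2 := fun u hu => by
    rw [snd_eq u hu e he, mul_assoc, e_snd_idem]
  have fst_eq (t : B) : x.1 (t * e.2) = y.1 (t * e.2) :=
    hA.mulHom_apply_eq hG (WreathProduct.evalHom G (t * e.2) (fixes t)) ⟨x, hx⟩ ⟨y, hy⟩
  have e_mul_eq : e * x = e * y := WreathProduct.ext
    (fun t => by rw [WreathProduct.fst_mul_apply, WreathProduct.fst_mul_apply, fst_eq])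
    (snd_eq _ (G.mul_mem he hx) _ (G.mul_mem he hy))
  rwa [(e_identity x hx).1, (e_identity y hy).1] at e_mul_eq

/-- If `A` and `B` are finite aperiodic monoids, then the wreath
product `A ≀ B` is aperiodic. -/
theorem wreath_aperiodic (A B : Type*) [Monoid A] [Monoid B] [Finite A] [Finite B]
    (hA : IsAperiodic A) (hB : IsAperiodic B) :
    IsAperiodic (WreathProduct A B) :=
  wreath_aperiodic_general hA hB
end

section
/- For a field k and n a positive integer, AS_n(k) divides (k^n)̃ ≀ AS*_n(k), where (k^n)̃ is the monoid consisting of the identity map and all constant maps on k^n. -/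
/-- A monoid `S` divides a monoid `T`, written `S ≺ T`, if `S` is a homomorphic image
of a submonoid of `T`. -/
def MonoidDivides (S T : Type*) [Monoid S] [Monoid T] : Prop :=
  ∃ (U : Submonoid T) (φ : U →* S), Function.Surjective φ

/-- The monoid of all transformations of `X`, with functions applied on the right:
`x (f * g) = (x f) g`, i.e. `f * g = g ∘ f`. -/
def RTrans (X : Type*) : Type _ := X → X

instance RTrans.instMonoid (X : Type*) : Monoid (RTrans X) where
  mul f g := fun x => g (f x)
  one := fun x => x
  mul_assoc _ _ _ := rfl
  one_mul _ := rfl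
  mul_one _ := rfl

/-- The affine scaling monoid `AS_m(R)`: all maps `v ↦ vλ + c` on row vectors `v ∈ R^m`
(where `vλ` is the row vector `v` multiplied by the scaling matrix `λI`),
under composition (functions applied on the right). -/
def affineScaling (m : ℕ) (R : Type*) [Semiring R] : Submonoid (RTrans (Fin m → R)) where
  carrier := {f | ∃ (a : R) (c : Fin m → R), f = fun v => fun i => v i * a + c i}
  one_mem' := ⟨1, 0, by funext v i; simp; rfl⟩
  mul_mem' := by
    rintro f g ⟨a, c, rfl⟩ ⟨b, d, rfl⟩
    refine ⟨a * b, fun i => c i * b + d i, ?_⟩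
    funext v i
    show ((fun v : Fin m → R => fun i => v i * a + c i) v i) * b + d i = _
    simp [add_mul, mul_assoc, add_assoc]

/-- `X̃`: the monoid consisting of the identity map together with all constant maps
on `X`, under composition. -/
def tildeMonoid (X : Type*) : Submonoid (RTrans X) where
  carrier := {f | f = 1 ∨ ∃ c : X, f = fun _ => c}
  one_mem' := Or.inl rfl
  mul_mem' := by
    rintro f g hf (rfl | ⟨d, rfl⟩)
    · rcases hf with rfl | ⟨c, rfl⟩
      · exact Or.inl (one_mul 1)
      · exact Or.inr ⟨c, rfl⟩
    · exact Or.inr ⟨d, rfl⟩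

/-- `AS*_m(k)`: the group of units of the affine scaling monoid `AS_m(k)`, i.e. all maps
`v ↦ vλ + c` with `λ ≠ 0`, realized as a submonoid of the transformation monoid. -/
def affineScalingStar (m : ℕ) (k : Type*) [Field k] : Submonoid (RTrans (Fin m → k)) where
  carrier := {f | ∃ (a : k) (c : Fin m → k), a ≠ 0 ∧ f = fun v => fun i => v i * a + c i}
  one_mem' := ⟨1, 0, one_ne_zero, by funext v i; simp; rfl⟩
  mul_mem' := by
    rintro f g ⟨a, c, ha, rfl⟩ ⟨b, d, hb, rfl⟩
    refine ⟨a * b, fun i => c i * b + d i, mul_ne_zero ha hb, ?_⟩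
    funext v i
    show ((fun v : Fin m → k => fun i => v i * a + c i) v i) * b + d i = _
    simp [add_mul, mul_assoc, add_assoc]

/-!
A monoid `T` acting on `Y` maps onto a transformation monoid `S` on `X`, after restriction to a
submonoid, as soon as some surjection `Y → X` intertwines every element of `S` with the action of
an element of `T`. Here `T = X̃ ≀ G` acts on `X × G` by `(x, t) ↦ (x f(t), t b)` and the
surjection is `(x, t) ↦ x t`. An element of `G` is covered by acting on the `G`-coordinate alone.
A constant map with value `c` is covered by leaving `t` fixed and resetting `x` to a preimage of
`c` under `t`, which exists because the elements of `G` are surjective.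
-/

theorem monoidDivides_of_injective_of_surjective {R S T : Type*} [Monoid R] [Monoid S] [Monoid T]
    (α : R →* T) (hα : Function.Injective α) (β : R →* S) (hβ : Function.Surjective β) :
    MonoidDivides S T := by
  have hα' : Function.Bijective α.mrangeRestrict :=
    ⟨fun _ _ h => hα (congrArg Subtype.val h), α.mrangeRestrict_surjective⟩
  let e : R ≃* MonoidHom.mrange α := MulEquiv.ofBijective α.mrangeRestrict hα'
  exact ⟨MonoidHom.mrange α, β.comp e.symm.toMonoidHom, hβ.comp e.symm.surjective⟩

/-- The covering relation along `π : Y → X` between a monoid `T` acting on `Y` through `ρ` and a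
transformation monoid `S` on `X`, as a submonoid of `T × S`: the pairs `(t, s)` such that `π`
intertwines `ρ t` with `s`. -/
def coveringSubmonoid {X Y T : Type*} [Monoid T] (ρ : T →* RTrans Y) (S : Submonoid (RTrans X))
    (π : Y → X) : Submonoid (T × S) where
  carrier := {p | Function.Semiconj π (ρ p.1) p.2.1}
  one_mem' := by
    change Function.Semiconj π (ρ 1) id
    rw [map_one]
    exact .id_right
  mul_mem' {p q} hp hq := by
    change Function.Semiconj π (ρ (p.1 * q.1)) (q.2.1 ∘ p.2.1)
    rw [map_mul]
    exact hq.comp_right hp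

theorem monoidDivides_of_forall_exists_semiconj {X Y T : Type*} [Monoid T] (ρ : T →* RTrans Y)
    {S : Submonoid (RTrans X)} {π : Y → X} (hπ : Function.Surjective π)
    (hS : ∀ s ∈ S, ∃ t, Function.Semiconj π (ρ t) s) : MonoidDivides S T := by
  let R := coveringSubmonoid ρ S π
  refine monoidDivides_of_injective_of_surjective
    ((MonoidHom.fst T S).comp R.subtype) ?injective ((MonoidHom.snd T S).comp R.subtype) ?surjective
  case injective =>
    rintro ⟨⟨t, s⟩, hs⟩ ⟨⟨_, s'⟩, hs'⟩ (rfl : t = _)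
    have hss' : s = s' := Subtype.ext (hπ.injective_comp_right (hs.comp_eq.symm.trans hs'.comp_eq))
    subst hss'
    rfl
  case surjective =>
    rintro ⟨s, hs⟩
    obtain ⟨t, ht⟩ := hS s hs
    exact ⟨⟨(t, ⟨s, hs⟩), ht⟩, rfl⟩

namespace WreathProduct

/-- The right action of `N ≀ T` on `X × T`, for `N` a monoid of transformations of `X`:
`(f, b)` sends `(x, t)` to `(x f(t), t b)`. -/
def toRTrans {X T : Type*} [Monoid T] (N : Submonoid (RTrans X)) :
    WreathProduct N T →* RTrans (X × T) where
  toFun w := fun p => ((w.1 p.2).1 p.1, p.2 * w.2)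
  map_one' := funext fun p => Prod.ext rfl (mul_one p.2)
  map_mul' w w' := funext fun p => Prod.ext rfl (mul_assoc p.2 w.2 w'.2).symm

variable {X : Type*} {N G : Submonoid (RTrans X)}

/-- The evaluation map `(x, t) ↦ x t` of a monoid `G` of transformations of `X`, along which
`N ≀ G`, acting on `X × G`, covers transformations of `X`. -/
def eval (G : Submonoid (RTrans X)) (p : X × G) : X := p.2.1 p.1

theorem eval_surjective : Function.Surjective (eval G) :=
  fun x => ⟨(x, 1), rfl⟩

theorem semiconj_eval_of_mem {g : RTrans X} (hg : g ∈ G) :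
    Function.Semiconj (eval G) (toRTrans N (fun _ => 1, ⟨g, hg⟩)) g :=
  fun _ => rfl

theorem exists_semiconj_eval_const (hG : ∀ g ∈ G, Function.Surjective g) (c : X) :
    ∃ w : WreathProduct (tildeMonoid X) G,
      Function.Semiconj (eval G) (toRTrans _ w) fun _ => c := by
  choose y hy using fun t : G => hG t.1 t.2 c
  exact ⟨(fun t => ⟨fun _ => y t, Or.inr ⟨y t, rfl⟩⟩, 1), fun p => hy p.2⟩

end WreathProduct

theorem monoidDivides_wreathProduct_tildeMonoid {X : Type*} {S G : Submonoid (RTrans X)}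
    (hG : ∀ g ∈ G, Function.Surjective g) (hS : ∀ s ∈ S, s ∈ G ∨ ∃ c : X, s = fun _ => c) :
    MonoidDivides S (WreathProduct (tildeMonoid X) G) := by
  refine monoidDivides_of_forall_exists_semiconj (WreathProduct.toRTrans _)
    WreathProduct.eval_surjective fun s hs => ?_
  obtain hsG | ⟨c, rfl⟩ := hS s hs
  · exact ⟨_, WreathProduct.semiconj_eval_of_mem hsG⟩
  · exact WreathProduct.exists_semiconj_eval_const hG c

section AffineScaling

variable {m : ℕ} {k : Type*} [Field k] {f : RTrans (Fin m → k)}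

theorem surjective_of_mem_affineScalingStar (hf : f ∈ affineScalingStar m k) :
    Function.Surjective f := by
  obtain ⟨a, c, ha, rfl⟩ := hf
  refine fun v => ⟨fun i => (v i - c i) / a, funext fun i => ?_⟩
  change (v i - c i) / a * a + c i = v i
  rw [div_mul_cancel₀ _ ha, sub_add_cancel]

theorem mem_affineScalingStar_or_eq_const (hf : f ∈ affineScaling m k) :
    f ∈ affineScalingStar m k ∨ ∃ c, f = fun _ => c := by
  obtain ⟨a, c, rfl⟩ := hf
  by_cases ha : a = 0
  · refine Or.inr ⟨c, ?_⟩
    simp only [ha, mul_zero, zero_add]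
    rfl
  · exact Or.inl ⟨a, c, ha, rfl⟩

end AffineScaling

/-- For a field `k` and a positive integer `n`, the affine scaling
monoid `AS_n(k)` divides `(k^n)̃ ≀ AS*_n(k)`. -/
theorem affineScaling_divides (n : ℕ) (hn : 0 < n) (k : Type*) [Field k] :
    MonoidDivides ↥(affineScaling n k)
      (WreathProduct ↥(tildeMonoid (Fin n → k)) ↥(affineScalingStar n k)) :=
  monoidDivides_wreathProduct_tildeMonoid (fun _ => surjective_of_mem_affineScalingStar)
    fun _ => mem_affineScalingStar_or_eq_const
end
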